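/- arXiv:1306.4753 — 3 statements merged into one kernel-verified Lean document; each statement's English description precedes it below -/
import Mathlib

section
/- Let C be a nonempty closed convex subset of Euclidean space E and let F : E → E be β-strongly monotone and L-Lipschitz on E with 0 < β ≤ L. Then there exists a unique x ∈ C such that −F(x) ∈ N_C(x); i.e., the variational inequality VI(F, C) has a unique solution. -/
/-!
Fix a step size `t > 0`. By the variational characterization of the metric projection `P` onto `C`,
a point `x` solves the variational inequality as soon as `x = P (x - t • F x)`. Since `P` is
nonexpansive (`norm_sub_le_of_inner_le_zero`) and, for `t = β / L ^ 2`, strong monotonicity and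
Lipschitz continuity make `x ↦ x - t • F x` a contraction with constant `√(1 - β ^ 2 / L ^ 2)`
(`norm_gradient_step_sub_sq_le`), the Banach fixed point theorem provides a solution. Two solutions
`x`, `y` satisfy `⟪x - y, F x - F y⟫ ≤ 0`, so they agree by strong monotonicity.
-/

open scoped InnerProductSpace

/-- Nonexpansiveness of the metric projection onto `C`, where `p` and `q` are specified as the
projections of `u` and `v` through their variational characterization. -/
lemma norm_sub_le_of_inner_le_zero {E : Type*} [NormedAddCommGroup E] [InnerProductSpace ℝ E]
    {C : Set E} {u v p q : E} (hp : p ∈ C) (hq : q ∈ C)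
    (hup : ∀ w ∈ C, ⟪u - p, w - p⟫_ℝ ≤ 0) (hvq : ∀ w ∈ C, ⟪v - q, w - q⟫_ℝ ≤ 0) :
    ‖p - q‖ ≤ ‖u - v‖ := by
  have h1 := hup q hq
  have h2 := hvq p hp
  have key : ⟪p - q, p - q⟫_ℝ = ⟪u - v, p - q⟫_ℝ + ⟪u - p, q - p⟫_ℝ + ⟪v - q, p - q⟫_ℝ := by
    simp only [inner_sub_left, inner_sub_right]
    ring
  rw [real_inner_self_eq_norm_sq] at key
  have h3 := real_inner_le_norm (u - v) (p - q)
  by_contra! h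
  nlinarith [norm_nonneg (u - v), norm_nonneg (p - q)]

lemma norm_gradient_step_sub_sq_le {E : Type*} [NormedAddCommGroup E] [InnerProductSpace ℝ E]
    {F : E → E} {β L : ℝ} (hL : 0 < L) (hβ : 0 < β)
    (hmono : ∀ x y, β * ‖x - y‖ ^ 2 ≤ ⟪x - y, F x - F y⟫_ℝ)
    (hlip : ∀ x y, ‖F x - F y‖ ≤ L * ‖x - y‖) (x y : E) :
    ‖(x - (β / L ^ 2) • F x) - (y - (β / L ^ 2) • F y)‖ ^ 2
      ≤ (1 - β ^ 2 / L ^ 2) * ‖x - y‖ ^ 2 := by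
  set t := β / L ^ 2 with ht
  have ht0 : 0 < t := by positivity
  have e : (x - t • F x) - (y - t • F y) = (x - y) - t • (F x - F y) := by
    rw [smul_sub]
    abel
  rw [e, norm_sub_sq_real, inner_smul_right, norm_smul, Real.norm_of_nonneg ht0.le, mul_pow]
  have h1 : t * (β * ‖x - y‖ ^ 2) ≤ t * ⟪x - y, F x - F y⟫_ℝ := by gcongr; exact hmono x y
  have h2 : t ^ 2 * ‖F x - F y‖ ^ 2 ≤ t ^ 2 * (L * ‖x - y‖) ^ 2 := by gcongr; exact hlip x y
  have h3 : (1 - β ^ 2 / L ^ 2) * ‖x - y‖ ^ 2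
      = ‖x - y‖ ^ 2 - 2 * (t * (β * ‖x - y‖ ^ 2)) + t ^ 2 * (L * ‖x - y‖) ^ 2 := by
    rw [ht]
    field_simp
    ring
  linarith

theorem vi_unique_solution_of_strongly_monotone
    (n : ℕ) (C : Set (EuclideanSpace ℝ (Fin n)))
    (hne : C.Nonempty) (hclosed : IsClosed C) (hconv : Convex ℝ C)
    (F : EuclideanSpace ℝ (Fin n) → EuclideanSpace ℝ (Fin n))
    (β L : ℝ) (hβ : 0 < β) (hβL : β ≤ L)
    (hmono : ∀ x y, β * ‖x - y‖ ^ 2 ≤ ⟪x - y, F x - F y⟫_ℝ)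
    (hlip : ∀ x y, ‖F x - F y‖ ≤ L * ‖x - y‖) :
    ∃! x, x ∈ C ∧ ∀ y ∈ C, ⟪-F x, y - x⟫_ℝ ≤ 0 := by
  have hL : 0 < L := hβ.trans_le hβL
  have hproj : ∀ u, ∃ p ∈ C, ∀ w ∈ C, ⟪u - p, w - p⟫_ℝ ≤ 0 := fun u => by
    obtain ⟨p, hp, h⟩ := exists_norm_eq_iInf_of_complete_convex hne hclosed.isComplete hconv u
    exact ⟨p, hp, (norm_eq_iInf_iff_real_inner_le_zero hconv hp).1 h⟩
  choose P hPC hP using hproj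
  have ht0 : 0 < β / L ^ 2 := by positivity
  have hc : 0 ≤ 1 - β ^ 2 / L ^ 2 := by
    rw [sub_nonneg, div_le_one (by positivity)]
    gcongr
  have hT : ContractingWith (Real.toNNReal √(1 - β ^ 2 / L ^ 2))
      (fun x => P (x - (β / L ^ 2) • F x)) := by
    refine ⟨?_, LipschitzWith.of_dist_le_mul fun x y => ?_⟩
    · rw [Real.toNNReal_lt_one, Real.sqrt_lt' one_pos]
      have : 0 < β ^ 2 / L ^ 2 := by positivity
      linarith
    · rw [Real.coe_toNNReal _ (Real.sqrt_nonneg _), dist_eq_norm, dist_eq_norm]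
      refine (norm_sub_le_of_inner_le_zero (hPC _) (hPC _) (hP _) (hP _)).trans ?_
      refine le_of_sq_le_sq ?_ (by positivity)
      rw [mul_pow, Real.sq_sqrt hc]
      exact norm_gradient_step_sub_sq_le hL hβ hmono hlip x y
  obtain ⟨x, hx⟩ : ∃ x, P (x - (β / L ^ 2) • F x) = x := ⟨_, hT.fixedPoint_isFixedPt⟩
  have hxC : x ∈ C := hx ▸ hPC _
  have hxVI : ∀ y ∈ C, ⟪-F x, y - x⟫_ℝ ≤ 0 := fun y hy => by
    have h := hP (x - (β / L ^ 2) • F x) y hy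
    rw [hx, sub_sub_cancel_left, ← smul_neg, real_inner_smul_left] at h
    exact nonpos_of_mul_nonpos_right h ht0
  refine ⟨x, ⟨hxC, hxVI⟩, ?_⟩
  rintro y ⟨hyC, hy⟩
  have h1 := hy x hxC
  have h2 := hxVI y hyC
  have h3 : ⟪y - x, F y - F x⟫_ℝ = ⟪-F y, x - y⟫_ℝ + ⟪-F x, y - x⟫_ℝ := by
    rw [real_inner_comm]
    simp only [inner_sub_left, inner_sub_right, inner_neg_left]
    ring
  have h4 := hmono y x
  have h5 : ‖y - x‖ ^ 2 ≤ 0 := nonpos_of_mul_nonpos_right (by linarith) hβ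
  exact sub_eq_zero.1 (norm_eq_zero.1 (pow_eq_zero_iff two_ne_zero |>.1 (h5.antisymm (sq_nonneg _))))
end

section
/- Let C be a nonempty closed convex subset of Euclidean space E, let S be a linear subspace of E with orthogonal projection Π_S, and suppose the map x ↦ x − α·F(x) is γ-Lipschitz on E with 0 ≤ γ < 1 for some α > 0. Let x* be the unique solution of VI(F, C) (so x* = Π_C(x* − α·F(x*))), set z* = x* − α·F(x*), let z̄ be the unique fixed point of U(z) = Π_S(Π_C(z) − α·F(Π_C(z))), and set x̄ = Π_C(z̄). Then ‖z* − z̄‖ ≤ ‖z* − Π_S(z*)‖ / (1 − γ) and ‖x* − x̄‖ ≤ ‖z* − Π_S(z*)‖ / (1 − γ). -/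
/-!
Both projections are nonexpansive. Since `x* = Π_C z*`, the map
`T z = Π_C z - α F (Π_C z)` fixes `z*`, and it is a `γ`-contraction because `Π_C` is nonexpansive.
As `zbar = Π_S (T zbar)`, the triangle inequality gives
`‖z* - zbar‖ ≤ ‖z* - Π_S z*‖ + ‖Π_S (T z*) - Π_S (T zbar)‖ ≤ ‖z* - Π_S z*‖ + γ ‖z* - zbar‖`,
which rearranges to the first bound. The second follows from it by applying `Π_C`.
-/

open scoped InnerProductSpace

/-- Firm nonexpansiveness implies nonexpansiveness: with `d` the difference of two points and `p`
the difference of their images, the hypothesis reads `‖p‖² ≤ ⟪d, p⟫`. -/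
lemma norm_le_of_inner_sub_nonneg {E : Type*} [NormedAddCommGroup E] [InnerProductSpace ℝ E]
    {d p : E} (h : 0 ≤ ⟪d - p, p⟫_ℝ) : ‖p‖ ≤ ‖d‖ := by
  rw [inner_sub_left, real_inner_self_eq_norm_mul_norm] at h
  have h2 := real_inner_le_norm d p
  by_contra hlt
  push Not at hlt
  nlinarith [norm_nonneg d, norm_nonneg p]

theorem new_galerkin_error_bound
    (n : ℕ) (C : Set (EuclideanSpace ℝ (Fin n)))
    (hne : C.Nonempty) (hclosed : IsClosed C) (hconv : Convex ℝ C)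
    (projC : EuclideanSpace ℝ (Fin n) → EuclideanSpace ℝ (Fin n))
    (hmemC : ∀ z, projC z ∈ C)
    (hprojC : ∀ z, ∀ y ∈ C, ⟪z - projC z, y - projC z⟫_ℝ ≤ 0)
    (S : Submodule ℝ (EuclideanSpace ℝ (Fin n)))
    (projS : EuclideanSpace ℝ (Fin n) → EuclideanSpace ℝ (Fin n))
    (hmemS : ∀ z, projS z ∈ S) (horthS : ∀ z, z - projS z ∈ Sᗮ)
    (F : EuclideanSpace ℝ (Fin n) → EuclideanSpace ℝ (Fin n))
    (α γ : ℝ) (hα : 0 < α) (hγ0 : 0 ≤ γ) (hγ1 : γ < 1)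
    (hlip : ∀ x y, ‖(x - α • F x) - (y - α • F y)‖ ≤ γ * ‖x - y‖)
    (U : EuclideanSpace ℝ (Fin n) → EuclideanSpace ℝ (Fin n))
    (hU : ∀ z, U z = projS (projC z - α • F (projC z)))
    (xstar : EuclideanSpace ℝ (Fin n)) (hxstar : xstar = projC (xstar - α • F xstar))
    (zstar : EuclideanSpace ℝ (Fin n)) (hzstar : zstar = xstar - α • F xstar)
    (zbar : EuclideanSpace ℝ (Fin n)) (hzbar : U zbar = zbar)
    (xbar : EuclideanSpace ℝ (Fin n)) (hxbar : xbar = projC zbar) :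
    ‖zstar - zbar‖ ≤ ‖zstar - projS zstar‖ / (1 - γ) ∧
    ‖xstar - xbar‖ ≤ ‖zstar - projS zstar‖ / (1 - γ) := by
  have hC : ∀ a b, ‖projC a - projC b‖ ≤ ‖a - b‖ := by
    intro a b
    apply norm_le_of_inner_sub_nonneg
    -- Sum the variational inequalities at `a` and `b`, each tested against the other projection.
    have h1 := hprojC a _ (hmemC b)
    have h2 := hprojC b _ (hmemC a)
    have e : ⟪a - b - (projC a - projC b), projC a - projC b⟫_ℝ
        = -⟪a - projC a, projC b - projC a⟫_ℝ - ⟪b - projC b, projC a - projC b⟫_ℝ := by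
      rw [← inner_neg_right, neg_sub, ← inner_sub_left]
      congr 1
      abel
    linarith
  have hS : ∀ a b, ‖projS a - projS b‖ ≤ ‖a - b‖ := by
    intro a b
    apply norm_le_of_inner_sub_nonneg
    have h := Submodule.inner_left_of_mem_orthogonal (S.sub_mem (hmemS a) (hmemS b))
      (Sᗮ.sub_mem (horthS a) (horthS b))
    rw [sub_sub_sub_comm]
    exact h.ge
  have hx : xstar = projC zstar := by rw [hzstar]; exact hxstar
  have hxx : ‖xstar - xbar‖ ≤ ‖zstar - zbar‖ := by
    rw [hx, hxbar]
    exact hC _ _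
  have hzb : projS (xbar - α • F xbar) = zbar := by rw [hxbar, ← hU, hzbar]
  have hcontr : ‖projS zstar - zbar‖ ≤ γ * ‖zstar - zbar‖ := by
    calc ‖projS zstar - zbar‖
        = ‖projS (xstar - α • F xstar) - projS (xbar - α • F xbar)‖ := by rw [hzb, ← hzstar]
      _ ≤ ‖(xstar - α • F xstar) - (xbar - α • F xbar)‖ := hS _ _
      _ ≤ γ * ‖xstar - xbar‖ := hlip _ _
      _ ≤ γ * ‖zstar - zbar‖ := mul_le_mul_of_nonneg_left hxx hγ0
  have hz : ‖zstar - zbar‖ ≤ ‖zstar - projS zstar‖ / (1 - γ) := by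
    rw [le_div_iff₀ (sub_pos.mpr hγ1)]
    linarith [norm_sub_le_norm_sub_add_norm_sub zstar (projS zstar) zbar]
  exact ⟨hz, hxx.trans hz⟩
end

section
/- Let M : E → E be a linear map on Euclidean space E satisfying ⟨x, Mx⟩ ≥ β‖x‖² and ‖Mx‖ ≤ L‖x‖ for all x, with 0 < β ≤ L, and let α = β/L². Let P be the orthogonal projection onto a linear subspace S of E and define N = I − P + α·P∘M. Then N is positive definite: ⟨x, Nx⟩ > 0 for every x ≠ 0. -/
open scoped InnerProductSpace

/-!
Write `y = x - α M x`, so that `N x = x - P y` and, `P` being self-adjoint and idempotent,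
`⟪x, N x⟫ = ‖x‖² - ⟪P x, y⟫`. The step size `α = β / L²` makes `I - α M` a strict contraction,
`‖y‖² ≤ (1 - α β) ‖x‖²`, while `‖P x‖ ≤ ‖x‖`; hence
`2 ⟪P x, y⟫ ≤ ‖P x‖² + ‖y‖² < 2 ‖x‖²` for `x ≠ 0`.
-/

theorem projective_lcp_matrix_pos_def
    (n : ℕ)
    (M : EuclideanSpace ℝ (Fin n) →ₗ[ℝ] EuclideanSpace ℝ (Fin n))
    (β L : ℝ) (hβ : 0 < β) (hβL : β ≤ L)
    (hmono : ∀ x, β * ‖x‖ ^ 2 ≤ ⟪x, M x⟫_ℝ)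
    (hlip : ∀ x, ‖M x‖ ≤ L * ‖x‖)
    (α : ℝ) (hα : α = β / L ^ 2)
    (S : Submodule ℝ (EuclideanSpace ℝ (Fin n)))
    (P : EuclideanSpace ℝ (Fin n) → EuclideanSpace ℝ (Fin n))
    (hPmem : ∀ x, P x ∈ S) (hPorth : ∀ x, x - P x ∈ Sᗮ) :
    ∀ x, x ≠ 0 → 0 < ⟪x, x - P x + α • P (M x)⟫_ℝ := by
  intro x hx
  have hL : 0 < L := hβ.trans_le hβL
  have hαpos : 0 < α := hα ▸ by positivity
  have hαL : α * L ^ 2 = β := by rw [hα]; field_simp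
  have hxx : 0 < ‖x‖ ^ 2 := by positivity
  -- `⟪P x, x⟫ = ‖P x‖²` and `⟪x, P (M x)⟫ = ⟪P x, M x⟫`, both from orthogonality to `S`.
  have hpx : ⟪P x, x⟫_ℝ = ‖P x‖ ^ 2 := by
    have h := Submodule.inner_right_of_mem_orthogonal (hPmem x) (hPorth x)
    rw [inner_sub_right, real_inner_self_eq_norm_sq] at h
    linarith
  have hpm : ⟪x, P (M x)⟫_ℝ = ⟪P x, M x⟫_ℝ := by
    have h₁ := Submodule.inner_left_of_mem_orthogonal (hPmem (M x)) (hPorth x)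
    have h₂ := Submodule.inner_right_of_mem_orthogonal (hPmem x) (hPorth (M x))
    rw [inner_sub_left] at h₁
    rw [inner_sub_right] at h₂
    linarith
  have hPle : ‖P x‖ ^ 2 ≤ ‖x‖ ^ 2 := by
    have h := norm_sub_sq_real (P x) x
    nlinarith [sq_nonneg ‖P x - x‖]
  have hy : ‖x - α • M x‖ ^ 2 ≤ (1 - α * β) * ‖x‖ ^ 2 := by
    have hM : ‖M x‖ ^ 2 ≤ L ^ 2 * ‖x‖ ^ 2 := by
      rw [← mul_pow]
      exact pow_le_pow_left₀ (norm_nonneg _) (hlip x) 2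
    have h₁ := mul_le_mul_of_nonneg_left hM (sq_nonneg α)
    have h₂ := mul_le_mul_of_nonneg_left (hmono x) hαpos.le
    have h₃ : α ^ 2 * (L ^ 2 * ‖x‖ ^ 2) = α * β * ‖x‖ ^ 2 := by rw [← hαL]; ring
    rw [norm_sub_sq_real, inner_smul_right, norm_smul, mul_pow, Real.norm_eq_abs, sq_abs]
    linarith
  have hcs : 2 * ⟪P x, x - α • M x⟫_ℝ ≤ ‖P x‖ ^ 2 + ‖x - α • M x‖ ^ 2 := by
    have h := norm_sub_sq_real (P x) (x - α • M x)
    nlinarith [sq_nonneg ‖P x - (x - α • M x)‖]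
  have hpos : 0 < α * β * ‖x‖ ^ 2 := by positivity
  rw [inner_sub_right, inner_smul_right, hpx] at hcs
  rw [inner_add_right, inner_sub_right, inner_smul_right, hpm, real_inner_self_eq_norm_sq,
    real_inner_comm, hpx]
  linarith
end
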